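/- Let H ⊂ ℂ^n be a compact convex set satisfying (as a subset of ℝ^{2n}) the Markov–Lipschitz inequality with constant M > 0, and let ν be a positive Borel measure on H with ν(H) ≤ 1 satisfying the uniform density bound: there exist T > 0 and r_0 > 0 such that ν(B(z,r)) ≥ r^T for all z ∈ H and 0 < r < r_0. Let w be a real polynomial in the 2n real coordinates with w > 0 on H, and set Q = −log w on H. For each d, let a^{*,d} ∈ H^{s(d)} be a point maximizing |VDM_d^Q| over H^{s(d)} (a weighted Fekete configuration of order d), and assume that the empirical measures (1/s(d)) Σ_{j=1}^{s(d)} δ(a^{*,d}_j) converge weak-* to some μ ∈ 𝓜(H) as d → ∞. Then for every open neighborhood G ⊆ 𝓜(H) of μ, liminf_{d→∞} log J_d^Q(μ,G) ≥ log δ̄^w(H); consequently inf_{G ∋ μ} liminf_{d→∞} log J_d^Q(μ,G) ≥ log δ̄^w(H). -/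

import Mathlib

open MeasureTheory Filter Topology ENNReal

noncomputable section

/-- Points of `ℂⁿ` (with the Euclidean metric). -/
abbrev Pt (n : ℕ) := EuclideanSpace ℂ (Fin n)

instance Pt.measurableSpace (n : ℕ) : MeasurableSpace (Pt n) := borel _

instance Pt.borelSpace (n : ℕ) : BorelSpace (Pt n) := ⟨rfl⟩

/-- `s(d) = binomial(d+n, n)`, the number of multi-indices `α ∈ ℕⁿ` with `|α| ≤ d`. -/
def sdim (n d : ℕ) : ℕ := (d + n).choose n

lemma sdim_pos (n d : ℕ) : 0 < sdim n d := Nat.choose_pos (Nat.le_add_left n d)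

/-- `E` is an enumeration of the multi-indices `α ∈ ℕⁿ` with `|α| ≤ d`. -/
def IsEnum (n d : ℕ) (E : Fin (sdim n d) → (Fin n → ℕ)) : Prop :=
  Function.Injective E ∧ ∀ α : Fin n → ℕ, ((∑ i, α i) ≤ d ↔ α ∈ Set.range E)

/-- The Vandermonde determinant `VDM_d(a_1, …, a_{s(d)}) = det [a_j^{α_i}]`. -/
def VDM (n d : ℕ) (E : Fin (sdim n d) → (Fin n → ℕ))
    (a : Fin (sdim n d) → Pt n) : ℂ :=
  Matrix.det (Matrix.of fun i j => ∏ k, (a j k) ^ (E i k))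

/-- `|VDM_d^Q(a)| = |VDM_d(a)| · w(a_1)^d ⋯ w(a_s)^d` where `w = e^{-Q}`, as a member
of `ℝ≥0∞`. -/
def absVDMQ (n d : ℕ) (E : Fin (sdim n d) → (Fin n → ℕ)) (H : Set (Pt n)) (Q : H → ℝ)
    (a : Fin (sdim n d) → H) : ℝ≥0∞ :=
  ENNReal.ofReal (‖VDM n d E (fun j => (a j : Pt n))‖ *
    ∏ j, Real.exp (-(d : ℝ) * Q (a j)))

/-- The empirical measure `(1/s) ∑_j δ_{a_j}` of a tuple of points. -/
def emp {X : Type*} [MeasurableSpace X] {s : ℕ} (a : Fin s → X) : Measure X :=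
  ((s : ℝ≥0∞))⁻¹ • ∑ j, Measure.dirac (a j)

lemma emp_univ {X : Type*} [MeasurableSpace X] {s : ℕ} (hs : s ≠ 0) (a : Fin s → X) :
    emp a Set.univ = 1 := by
  have : (emp a) Set.univ = ((s : ℝ≥0∞))⁻¹ * ∑ j : Fin s, (Measure.dirac (a j)) Set.univ := by
    simp [emp, Measure.smul_apply, Measure.finset_sum_apply]
  rw [this]
  simp only [measure_univ, Finset.sum_const, Finset.card_univ, Fintype.card_fin, nsmul_eq_mul,
    mul_one]
  exact ENNReal.inv_mul_cancel (by exact_mod_cast hs) (by simp)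

/-- The empirical probability measure `(1/s) ∑_j δ_{a_j}` of a tuple of points. -/
def empPM {X : Type*} [MeasurableSpace X] {s : ℕ} (hs : s ≠ 0) (a : Fin s → X) :
    ProbabilityMeasure X := ⟨emp a, ⟨emp_univ hs a⟩⟩

/-- `G̃_s(μ)`: the tuples in `H^s` whose empirical measure lies in `G`. -/
def Gtilde {n : ℕ} (d : ℕ) (H : Set (Pt n)) (G : Set (ProbabilityMeasure H)) :
    Set (Fin (sdim n d) → H) :=
  {a | empPM (sdim_pos n d).ne' a ∈ G}

/-- `J_d^Q(μ, G) = (∫_{G̃_s(μ)} |VDM_d^Q(a)|² dν^{⊗s}(a))^{1/(2ds)}`. -/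
def Jd (n d : ℕ) (E : Fin (sdim n d) → (Fin n → ℕ)) (H : Set (Pt n)) (ν : Measure H)
    (Q : H → ℝ) (G : Set (ProbabilityMeasure H)) : ℝ≥0∞ :=
  (∫⁻ a in Gtilde d H G, (absVDMQ n d E H Q a) ^ 2
      ∂(Measure.pi fun _ : Fin (sdim n d) => ν)) ^ (1 / (2 * d * sdim n d) : ℝ)

/-- `W_d^Q(μ, G) = sup { |VDM_d^Q(a)|^{1/(ds)} : a ∈ G̃_s(μ) }`. -/
def Wd (n d : ℕ) (E : Fin (sdim n d) → (Fin n → ℕ)) (H : Set (Pt n))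
    (Q : H → ℝ) (G : Set (ProbabilityMeasure H)) : ℝ≥0∞ :=
  ⨆ a ∈ Gtilde d H G, (absVDMQ n d E H Q a) ^ (1 / (d * sdim n d) : ℝ)

/-- `J^Q(μ) = inf_{G ∋ μ} limsup_{d → ∞} J_d^Q(μ, G)`, the infimum being over all open
neighborhoods `G` of `μ` in `𝓜(H)`. -/
def JQ (n : ℕ) (E : ∀ d, Fin (sdim n d) → (Fin n → ℕ)) (H : Set (Pt n)) (ν : Measure H)
    (Q : H → ℝ) (μ : ProbabilityMeasure H) : ℝ≥0∞ :=
  ⨅ G ∈ {G : Set (ProbabilityMeasure H) | IsOpen G ∧ μ ∈ G},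
    limsup (fun d => Jd n d (E d) H ν Q G) atTop

/-- `W^Q(μ) = inf_{G ∋ μ} limsup_{d → ∞} W_d^Q(μ, G)`, the infimum being over all open
neighborhoods `G` of `μ` in `𝓜(H)`. -/
def WQ (n : ℕ) (E : ∀ d, Fin (sdim n d) → (Fin n → ℕ)) (H : Set (Pt n))
    (Q : H → ℝ) (μ : ProbabilityMeasure H) : ℝ≥0∞ :=
  ⨅ G ∈ {G : Set (ProbabilityMeasure H) | IsOpen G ∧ μ ∈ G},
    limsup (fun d => Wd n d (E d) H Q G) atTop

/-- `δ̄^w(H) = lim sup_d (sup_{a ∈ H^{s(d)}} |VDM_d^Q(a)|)^{1/(d·s(d))}` where `w = e^{-Q}`. -/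
def deltaBar (n : ℕ) (E : ∀ d, Fin (sdim n d) → (Fin n → ℕ)) (H : Set (Pt n))
    (Q : H → ℝ) : ℝ≥0∞ :=
  limsup (fun d => (⨆ a : Fin (sdim n d) → H, absVDMQ n d (E d) H Q a)
    ^ (1 / (d * sdim n d) : ℝ)) atTop

/-- The density condition on `(H, ν)`: there is `T > 0` such that for every `z₀ ∈ H`
there is `r(z₀) > 0` with `ν(B(z₀,r)) ≥ r^T` for all `0 < r < r(z₀)`. -/
def DensityCond {n : ℕ} (H : Set (Pt n)) (ν : Measure H) : Prop :=
  ∃ T : ℝ, 0 < T ∧ ∀ z₀ : H, ∃ r₀ > 0, ∀ r : ℝ, 0 < r → r < r₀ →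
    ENNReal.ofReal (r ^ T) ≤ ν (Metric.ball z₀ r)

/-- The `2n` real coordinates of a point `z = x + iy ∈ ℂⁿ ≅ ℝ^{2n}`. -/
def realCoords {n : ℕ} (z : Pt n) : (Fin n) ⊕ (Fin n) → ℝ :=
  Sum.elim (fun j => (z j).re) (fun j => (z j).im)

/-- `H ⊂ ℂⁿ ≅ ℝ^{2n}` satisfies the Markov–Lipschitz inequality with constant `M`:
`|p(x) - p(y)| ≤ M (deg p)² (sup_H |p|) |x - y|` for all real polynomials `p` in the `2n`
real coordinates and all `x, y ∈ H`. -/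
def MarkovLip (n : ℕ) (H : Set (Pt n)) (M : ℝ) : Prop :=
  ∀ p : MvPolynomial ((Fin n) ⊕ (Fin n)) ℝ, ∀ x ∈ H, ∀ y ∈ H,
    |MvPolynomial.eval (realCoords x) p - MvPolynomial.eval (realCoords y) p| ≤
      M * (p.totalDegree : ℝ) ^ 2 *
        sSup ((fun z : Pt n => |MvPolynomial.eval (realCoords z) p|) '' H) * dist x y

/-!
Up to a factor `s!`, the maximum of the weighted Vandermonde determinant of order `d` is the
product, over the multi-indices `α` of degree at most `d`, of the Chebyshev constants `T d α`: the
least sup-norm of a weighted polynomial of order `d` with leading monomial `z ^ α`. These satisfy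
`T (d + e) (α + β) ≤ T d α * T e β`, so the `d * s(d)`-th roots of the maxima converge, and the
limit superior defining `δ̄^w(H)` is a limit.

As a function of one of its points the determinant is a weighted polynomial bounded by the maximum.
By the Markov inequality it therefore keeps half of its maximal size when the Fekete points move
within balls of a radius decaying like a power of `d`. The `s(d)` balls have `ν`-mass at least a
power of `d`, hence contribute a factor tending to `1` to the `2 * d * s(d)`-th root, and the
empirical measures of the moved points still lie in `G` for large `d`.
-/

open scoped NNReal
open Metric (infNndist)

section InfNndist

theorem le_mul_infNndist {α : Type*} [PseudoMetricSpace α] {S : Set α} (hS : S.Nonempty) {x : α}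
    {c K : ℝ≥0} (h : ∀ y ∈ S, c ≤ K * nndist x y) : c ≤ K * infNndist x S := by
  rcases eq_zero_or_pos K with rfl | hK
  · obtain ⟨y, hy⟩ := hS
    simpa using h y hy
  · rw [← div_le_iff₀' hK, ← NNReal.coe_le_coe, Metric.coe_infNndist, Metric.le_infDist hS]
    intro y hy
    rw [dist_nndist, NNReal.coe_le_coe, div_le_iff₀' hK]
    exact h y hy

theorem infNndist_le_nndist {α : Type*} [PseudoMetricSpace α] {S : Set α} {x y : α} (hy : y ∈ S) :
    infNndist x S ≤ nndist x y :=
  NNReal.coe_le_coe.1 (Metric.infDist_le_dist_of_mem hy)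

variable {𝕜 E : Type*} [NormedField 𝕜] [SeminormedAddCommGroup E] [NormedSpace 𝕜 E]

theorem nnnorm_mul_infNndist_le {S : Submodule 𝕜 E} (c : 𝕜) (x : E) {y : E} (hy : y ∈ S) :
    ‖c‖₊ * infNndist x S ≤ ‖c • x + y‖₊ := by
  rcases eq_or_ne c 0 with rfl | hc
  · simp
  · calc ‖c‖₊ * infNndist x S ≤ ‖c‖₊ * nndist x (-(c⁻¹ • y)) := by
          gcongr
          exact infNndist_le_nndist (S.neg_mem (S.smul_mem _ hy))
      _ = ‖c • x + y‖₊ := by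
          rw [nndist_eq_nnnorm, sub_neg_eq_add, ← nnnorm_smul, smul_add, smul_inv_smul₀ hc]

end InfNndist

section Collocation

variable {𝕜 X : Type*} [NormedField 𝕜] [TopologicalSpace X]

/-- The collocation matrix `(f i (a j))` of a family of functions at a family of points; for
monomials `f i` it is the Vandermonde matrix. -/
def collocationMatrix {ι κ : Type*} (f : ι → C(X, 𝕜)) (a : κ → X) : Matrix ι κ 𝕜 :=
  Matrix.of fun i j => f i (a j)

@[simp]
theorem collocationMatrix_apply {ι κ : Type*} (f : ι → C(X, 𝕜)) (a : κ → X) (i : ι) (j : κ) :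
    collocationMatrix f a i j = f i (a j) := rfl

theorem det_collocationMatrix_update {ι : Type*} [Fintype ι] [DecidableEq ι] (f : ι → C(X, 𝕜))
    (a : ι → X) (j : ι) (x : X) :
    (collocationMatrix f (Function.update a j x)).det =
      (∑ i, (collocationMatrix f a).adjugate j i • f i) x := by
  have hcol : collocationMatrix f (Function.update a j x) =
      (collocationMatrix f a).updateCol j fun i => f i x := by
    ext i k
    rcases eq_or_ne k j with rfl | hk
    · simp
    · simp [hk]
  rw [hcol, ← Matrix.cramer_apply, Matrix.cramer_eq_adjugate_mulVec]
  simp [Matrix.mulVec, dotProduct, ContinuousMap.sum_apply]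

theorem nnnorm_det_collocationMatrix_comp_perm {ι : Type*} [Fintype ι] [DecidableEq ι]
    (σ : Equiv.Perm ι) (f : ι → C(X, 𝕜)) (a : ι → X) :
    ‖(collocationMatrix (f ∘ σ) a).det‖₊ = ‖(collocationMatrix f a).det‖₊ := by
  have hrow : collocationMatrix (f ∘ σ) a = (collocationMatrix f a).submatrix σ id := rfl
  rcases Int.units_eq_one_or (Equiv.Perm.sign σ) with h | h <;>
    simp [hrow, Matrix.det_permute, h]

theorem nnnorm_adjugate_collocationMatrix_last {s : ℕ} (f : Fin (s + 1) → C(X, 𝕜))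
    (a : Fin (s + 1) → X) (j : Fin (s + 1)) :
    ‖(collocationMatrix f a).adjugate j (Fin.last s)‖₊ =
      ‖(collocationMatrix (f ∘ Fin.castSucc) (a ∘ j.succAbove)).det‖₊ := by
  simp only [Matrix.adjugate_fin_succ_eq_det_submatrix, nnnorm_mul, nnnorm_pow, nnnorm_neg,
    nnnorm_one, one_pow, one_mul, Fin.succAbove_last]
  rfl

variable [CompactSpace X]

variable (𝕜) in
/-- The sup-norm distance of `f i` to the span of the functions preceding it. -/
def flagDist {s : ℕ} (f : Fin s → C(X, 𝕜)) (i : Fin s) : ℝ≥0 :=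
  infNndist (f i) (Submodule.span 𝕜 (f '' Set.Iio i))

theorem flagDist_castSucc {s : ℕ} (f : Fin (s + 1) → C(X, 𝕜)) (i : Fin s) :
    flagDist 𝕜 f i.castSucc = flagDist 𝕜 (f ∘ Fin.castSucc) i := by
  rw [flagDist, flagDist, Set.image_comp, Fin.image_castSucc_Iio, Function.comp_apply]

theorem exists_prod_flagDist_le_nnnorm_det [Nonempty X] :
    ∀ {s : ℕ} (f : Fin s → C(X, 𝕜)),
      ∃ a : Fin s → X, ∏ i, flagDist 𝕜 f i ≤ ‖(collocationMatrix f a).det‖₊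
  | 0, f => ⟨Fin.elim0, by simp⟩
  | s + 1, f => by
    obtain ⟨b, hb⟩ := exists_prod_flagDist_le_nnnorm_det (f ∘ Fin.castSucc)
    let a : Fin (s + 1) → X := Fin.snoc b (Classical.arbitrary X)
    let g : C(X, 𝕜) := ∑ i, (collocationMatrix f a).adjugate (Fin.last s) i • f i
    have hlead : ‖(collocationMatrix f a).adjugate (Fin.last s) (Fin.last s)‖₊ =
        ‖(collocationMatrix (f ∘ Fin.castSucc) b).det‖₊ := by
      rw [nnnorm_adjugate_collocationMatrix_last, Fin.succAbove_last, Fin.snoc_comp_castSucc]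
    have hspan : ∑ i : Fin s, (collocationMatrix f a).adjugate (Fin.last s) i.castSucc •
        f i.castSucc ∈ Submodule.span 𝕜 (f '' Set.Iio (Fin.last s)) :=
      Submodule.sum_mem _ fun i _ => Submodule.smul_mem _ _ <|
        Submodule.subset_span ⟨_, Fin.castSucc_lt_last i, rfl⟩
    obtain ⟨x, -, hx⟩ := isCompact_univ.exists_isMaxOn Set.univ_nonempty
      (map_continuous g).nnnorm.continuousOn
    refine ⟨Function.update a (Fin.last s) x, ?_⟩
    calc ∏ i, flagDist 𝕜 f i
        = (∏ i, flagDist 𝕜 (f ∘ Fin.castSucc) i) * flagDist 𝕜 f (Fin.last s) := by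
          rw [Fin.prod_univ_castSucc]
          simp only [flagDist_castSucc]
      _ ≤ ‖(collocationMatrix (f ∘ Fin.castSucc) b).det‖₊ * flagDist 𝕜 f (Fin.last s) := by
          gcongr
      _ ≤ ‖g‖₊ := by
          rw [← hlead]
          refine (nnnorm_mul_infNndist_le _ (f (Fin.last s)) hspan).trans_eq ?_
          rw [add_comm, ← Fin.sum_univ_castSucc fun i =>
            (collocationMatrix f a).adjugate (Fin.last s) i • f i]
      _ ≤ ‖g x‖₊ := by
          rw [ContinuousMap.nnnorm_eq_iSup_nnnorm]
          exact ciSup_le fun y => hx (Set.mem_univ y)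
      _ = ‖(collocationMatrix f (Function.update a (Fin.last s) x)).det‖₊ := by
          rw [det_collocationMatrix_update]

theorem nnnorm_det_le_factorial_mul_prod_flagDist :
    ∀ {s : ℕ} (f : Fin s → C(X, 𝕜)) (a : Fin s → X),
      ‖(collocationMatrix f a).det‖₊ ≤ s.factorial * ∏ i, flagDist 𝕜 f i
  | 0, f, a => by simp
  | s + 1, f, a => by
    set c : Fin (s + 1) → 𝕜 := fun j => (collocationMatrix f a).adjugate j (Fin.last s)
    let φ : C(X, 𝕜) →ₗ[𝕜] 𝕜 := ∑ j, c j • (ContinuousMap.evalCLM 𝕜 (a j)).toLinearMap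
    have hφ (g : C(X, 𝕜)) : φ g = ∑ j, g (a j) * c j := by
      simp [φ, mul_comm]
    have hφf (i) : φ (f i) = if i = Fin.last s then (collocationMatrix f a).det else 0 := by
      have := congr_fun₂ (Matrix.mul_adjugate (collocationMatrix f a)) i (Fin.last s)
      simpa [hφ, Matrix.mul_apply, Matrix.one_apply] using this
    have hφspan {y : C(X, 𝕜)} (hy : y ∈ Submodule.span 𝕜 (f '' Set.Iio (Fin.last s))) :
        φ y = 0 := by
      have hle : Submodule.span 𝕜 (f '' Set.Iio (Fin.last s)) ≤ LinearMap.ker φ :=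
        Submodule.span_le.2 <| Set.image_subset_iff.2 fun i hi => by
          simp [hφf, (Set.mem_Iio.1 hi).ne]
      exact hle hy
    have hc (j) : ‖c j‖₊ ≤ s.factorial * ∏ i : Fin s, flagDist 𝕜 f i.castSucc := by
      simpa only [c, nnnorm_adjugate_collocationMatrix_last, flagDist_castSucc] using
        nnnorm_det_le_factorial_mul_prod_flagDist (f ∘ Fin.castSucc) (a ∘ j.succAbove)
    rw [Fin.prod_univ_castSucc, ← mul_assoc]
    refine le_mul_infNndist (Submodule.nonempty _) fun y hy => ?_
    calc ‖(collocationMatrix f a).det‖₊ = ‖φ (f (Fin.last s) - y)‖₊ := by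
          rw [map_sub, hφspan hy, hφf, if_pos rfl, sub_zero]
      _ ≤ ∑ j, ‖(f (Fin.last s) - y) (a j)‖₊ * ‖c j‖₊ := by
          rw [hφ]
          exact (nnnorm_sum_le _ _).trans_eq (by simp only [nnnorm_mul])
      _ ≤ ∑ _j : Fin (s + 1), ‖f (Fin.last s) - y‖₊ *
            (s.factorial * ∏ i : Fin s, flagDist 𝕜 f i.castSucc) := by
          gcongr with j
          · exact (f (Fin.last s) - y).norm_coe_le_norm (a j)
          · exact hc j
      _ = (s + 1).factorial * (∏ i : Fin s, flagDist 𝕜 f i.castSucc) *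
            nndist (f (Fin.last s)) y := by
          rw [Finset.sum_const, Finset.card_fin, nsmul_eq_mul, nndist_eq_nnnorm,
            Nat.factorial_succ]
          push_cast
          ring

end Collocation

section ChebyshevConst

variable {𝕜 A σ : Type*} [Fintype σ]

/-- The monomial `z ^ α` weighted by `W ^ d`, in a commutative ring. -/
def weightedMonomial [CommSemiring A] (W : A) (z : σ → A) (d : ℕ) (α : σ → ℕ) : A :=
  W ^ d * ∏ k, z k ^ α k

theorem weightedMonomial_mul_weightedMonomial [CommSemiring A] (W : A) (z : σ → A) (d e : ℕ)
    (α β : σ → ℕ) :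
    weightedMonomial W z d α * weightedMonomial W z e β =
      weightedMonomial W z (d + e) (α + β) := by
  simp only [weightedMonomial, Pi.add_apply, pow_add, Finset.prod_mul_distrib]
  ring

theorem nnnorm_weightedMonomial_le [NormedCommRing A] [NormOneClass A] (W : A) (z : σ → A)
    {d : ℕ} {α : σ → ℕ} (hα : ∑ k, α k ≤ d) :
    ‖weightedMonomial W z d α‖₊ ≤ (max 1 ‖W‖₊ * max 1 ‖z‖₊) ^ d := by
  have hz : ‖∏ k, z k ^ α k‖₊ ≤ max 1 ‖z‖₊ ^ d := by
    calc ‖∏ k, z k ^ α k‖₊ ≤ ∏ k, ‖z k ^ α k‖₊ := Finset.nnnorm_prod_le _ _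
      _ ≤ ∏ k, max 1 ‖z‖₊ ^ α k := by
          gcongr with k
          refine (nnnorm_pow_le _ _).trans (pow_le_pow_left₀ zero_le ?_ _)
          exact (nnnorm_le_pi_nnnorm z k).trans (le_max_right _ _)
      _ ≤ max 1 ‖z‖₊ ^ d := by
          rw [Finset.prod_pow_eq_pow_sum]
          exact pow_le_pow_right₀ (le_max_left _ _) hα
  calc ‖weightedMonomial W z d α‖₊ ≤ ‖W ^ d‖₊ * ‖∏ k, z k ^ α k‖₊ := nnnorm_mul_le _ _
    _ ≤ max 1 ‖W‖₊ ^ d * max 1 ‖z‖₊ ^ d := by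
        gcongr
        exact (nnnorm_pow_le _ _).trans (pow_le_pow_left₀ zero_le (le_max_right _ _) _)
    _ = (max 1 ‖W‖₊ * max 1 ‖z‖₊) ^ d := (mul_pow _ _ _).symm

variable [LinearOrder σ]

variable (𝕜) in
/-- The span of the weighted monomials of degree at most `d` that precede `α` in the
lexicographic order. -/
def lowerSpan [CommSemiring 𝕜] [CommSemiring A] [Algebra 𝕜 A] (W : A) (z : σ → A) (d : ℕ)
    (α : σ → ℕ) : Submodule 𝕜 A :=
  Submodule.span 𝕜 (weightedMonomial W z d '' {β | toLex β < toLex α ∧ ∑ k, β k ≤ d})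

theorem mul_mem_lowerSpan [CommSemiring 𝕜] [CommSemiring A] [Algebra 𝕜 A] {W : A} {z : σ → A}
    {d e : ℕ} {α : σ → ℕ} {S T : Set (σ → ℕ)} {p q : A}
    (hST : ∀ β ∈ S, ∀ γ ∈ T, toLex (β + γ) < toLex α ∧ ∑ k, (β + γ) k ≤ d + e)
    (hp : p ∈ Submodule.span 𝕜 (weightedMonomial W z d '' S))
    (hq : q ∈ Submodule.span 𝕜 (weightedMonomial W z e '' T)) :
    p * q ∈ lowerSpan 𝕜 W z (d + e) α := by
  have hpq := Submodule.mul_mem_mul hp hq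
  rw [Submodule.span_mul_span] at hpq
  refine Submodule.span_mono ?_ hpq
  rintro _ ⟨_, ⟨β, hβ, rfl⟩, _, ⟨γ, hγ, rfl⟩, rfl⟩
  exact ⟨β + γ, hST β hβ γ hγ, (weightedMonomial_mul_weightedMonomial W z d e β γ).symm⟩

variable [NormedField 𝕜] [SeminormedCommRing A] [NormedAlgebra 𝕜 A]

variable (𝕜) in
/-- The Chebyshev constant of the multi-index `α` in degree `d`: the least norm of
`W ^ d * p`, where `p` runs over the polynomials of degree at most `d` in `z` whose
lexicographically leading term is `z ^ α`. -/
def chebyshevConst (W : A) (z : σ → A) (d : ℕ) (α : σ → ℕ) : ℝ≥0 :=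
  infNndist (weightedMonomial W z d α) (lowerSpan 𝕜 W z d α)

theorem chebyshevConst_le_nnnorm (W : A) (z : σ → A) (d : ℕ) (α : σ → ℕ) :
    chebyshevConst 𝕜 W z d α ≤ ‖weightedMonomial W z d α‖₊ :=
  (infNndist_le_nndist (Submodule.zero_mem _)).trans_eq (by rw [nndist_eq_nnnorm, sub_zero])

theorem chebyshevConst_add_le (W : A) (z : σ → A) {d e : ℕ} {α β : σ → ℕ}
    (hα : ∑ k, α k ≤ d) (hβ : ∑ k, β k ≤ e) :
    chebyshevConst 𝕜 W z (d + e) (α + β) ≤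
      chebyshevConst 𝕜 W z d α * chebyshevConst 𝕜 W z e β := by
  have hself (d α) : weightedMonomial W z d α ∈
      Submodule.span 𝕜 (weightedMonomial W z d '' {α}) :=
    Submodule.subset_span ⟨α, rfl, rfl⟩
  have hsum {γ δ : σ → ℕ} (hγ : ∑ k, γ k ≤ d) (hδ : ∑ k, δ k ≤ e) :
      ∑ k, (γ + δ) k ≤ d + e :=
    Finset.sum_add_distrib.trans_le (add_le_add hγ hδ)
  refine le_mul_infNndist (Submodule.nonempty _) fun q hq => ?_
  rw [mul_comm]
  refine le_mul_infNndist (Submodule.nonempty _) fun p hp => ?_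
  set x := weightedMonomial W z d α
  set y := weightedMonomial W z e β
  have hpy : p * y ∈ lowerSpan 𝕜 W z (d + e) (α + β) := by
    refine mul_mem_lowerSpan ?_ hp (hself e β)
    rintro γ ⟨hγ, hγd⟩ _ rfl
    exact ⟨add_lt_add_left hγ _, hsum hγd hβ⟩
  have hxq : x * q ∈ lowerSpan 𝕜 W z (d + e) (α + β) := by
    refine mul_mem_lowerSpan ?_ (hself d α) hq
    rintro _ rfl δ ⟨hδ, hδe⟩
    exact ⟨add_lt_add_right hδ _, hsum hα hδe⟩
  have hpq : p * q ∈ lowerSpan 𝕜 W z (d + e) (α + β) := by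
    refine mul_mem_lowerSpan ?_ hp hq
    rintro γ ⟨hγ, hγd⟩ δ ⟨hδ, hδe⟩
    exact ⟨add_lt_add hγ hδ, hsum hγd hδe⟩
  calc chebyshevConst 𝕜 W z (d + e) (α + β)
      ≤ nndist (x * y) (p * y + x * q - p * q) := by
        rw [weightedMonomial_mul_weightedMonomial]
        exact infNndist_le_nndist (Submodule.sub_mem _ (Submodule.add_mem _ hpy hxq) hpq)
    _ = ‖(y - q) * (x - p)‖₊ := by
        rw [nndist_eq_nnnorm]
        congr 1
        ring
    _ ≤ nndist y q * nndist x p := by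
        rw [nndist_eq_nnnorm, nndist_eq_nnnorm]
        exact nnnorm_mul_le _ _

end ChebyshevConst

/-- The weighted Vandermonde determinant `det [(W ^ d * z ^ E i) (a j)]` of a tuple of points of a
space `X`, for a weight `W` and coordinate functions `z` on `X`. -/
def weightedVDM {𝕜 X σ ι : Type*} [NormedField 𝕜] [TopologicalSpace X] [Fintype σ] [Fintype ι]
    [DecidableEq ι] (W : C(X, 𝕜)) (z : σ → C(X, 𝕜)) (d : ℕ) (E : ι → σ → ℕ) (a : ι → X) : 𝕜 :=
  (collocationMatrix (fun i => weightedMonomial W z d (E i)) a).det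

section LexEnumeration

variable {𝕜 X σ : Type*} [NormedField 𝕜] [TopologicalSpace X] [CompactSpace X] [Fintype σ]
  [LinearOrder σ] (W : C(X, 𝕜)) (z : σ → C(X, 𝕜)) {s d : ℕ} {E : Fin s → σ → ℕ}

theorem flagDist_weightedMonomial (hE : ∀ α : σ → ℕ, ∑ k, α k ≤ d ↔ α ∈ Set.range E)
    (hlex : StrictMono (toLex ∘ E)) (i : Fin s) :
    flagDist 𝕜 (fun i => weightedMonomial W z d (E i)) i = chebyshevConst 𝕜 W z d (E i) := by
  have hIio : E '' Set.Iio i = {β | toLex β < toLex (E i) ∧ ∑ k, β k ≤ d} := by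
    ext β
    constructor
    · rintro ⟨j, hj, rfl⟩
      exact ⟨hlex hj, (hE _).2 ⟨j, rfl⟩⟩
    · rintro ⟨hβ, hβd⟩
      obtain ⟨j, rfl⟩ := (hE β).1 hβd
      exact ⟨j, hlex.lt_iff_lt.1 hβ, rfl⟩
  rw [flagDist, chebyshevConst, lowerSpan, ← hIio, Set.image_image]

theorem exists_perm_prod_flagDist_eq (hinj : Function.Injective E)
    (hE : ∀ α : σ → ℕ, ∑ k, α k ≤ d ↔ α ∈ Set.range E) :
    ∃ τ : Equiv.Perm (Fin s),
      ∏ i, flagDist 𝕜 ((fun i => weightedMonomial W z d (E i)) ∘ τ) i =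
        ∏ i, chebyshevConst 𝕜 W z d (E i) := by
  let τ := Tuple.sort (toLex ∘ E)
  have hlex : StrictMono (toLex ∘ E ∘ τ) :=
    (Tuple.monotone_sort (toLex ∘ E)).strictMono_of_injective
      (toLex.injective.comp (hinj.comp τ.injective))
  have hEτ (α : σ → ℕ) : ∑ k, α k ≤ d ↔ α ∈ Set.range (E ∘ τ) := by
    rw [EquivLike.range_comp, hE]
  refine ⟨τ, ?_⟩
  calc ∏ i, flagDist 𝕜 ((fun i => weightedMonomial W z d (E i)) ∘ τ) i
      = ∏ i, chebyshevConst 𝕜 W z d (E (τ i)) :=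
        Finset.prod_congr rfl fun i _ => flagDist_weightedMonomial W z hEτ hlex i
    _ = ∏ i, chebyshevConst 𝕜 W z d (E i) :=
        Equiv.prod_comp τ fun i => chebyshevConst 𝕜 W z d (E i)

theorem exists_prod_chebyshevConst_le_nnnorm_weightedVDM [Nonempty X] (hinj : Function.Injective E)
    (hE : ∀ α : σ → ℕ, ∑ k, α k ≤ d ↔ α ∈ Set.range E) :
    ∃ a : Fin s → X, ∏ i, chebyshevConst 𝕜 W z d (E i) ≤ ‖weightedVDM W z d E a‖₊ := by
  obtain ⟨τ, hτ⟩ := exists_perm_prod_flagDist_eq W z hinj hE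
  obtain ⟨a, ha⟩ :=
    exists_prod_flagDist_le_nnnorm_det ((fun i => weightedMonomial W z d (E i)) ∘ τ)
  rw [hτ, nnnorm_det_collocationMatrix_comp_perm] at ha
  exact ⟨a, ha⟩

theorem nnnorm_weightedVDM_le_factorial_mul_prod_chebyshevConst (hinj : Function.Injective E)
    (hE : ∀ α : σ → ℕ, ∑ k, α k ≤ d ↔ α ∈ Set.range E) (a : Fin s → X) :
    ‖weightedVDM W z d E a‖₊ ≤ s.factorial * ∏ i, chebyshevConst 𝕜 W z d (E i) := by
  obtain ⟨τ, hτ⟩ := exists_perm_prod_flagDist_eq W z hinj hE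
  rw [weightedVDM, ← hτ, ← nnnorm_det_collocationMatrix_comp_perm τ]
  exact nnnorm_det_le_factorial_mul_prod_flagDist _ a

end LexEnumeration

section SubmultiplicativeProduct

theorem injective_nsmul_add_fin {σ : Type*} (q : ℕ) :
    Function.Injective fun x : (σ → ℕ) × (σ → Fin q) => q • x.1 + fun i => (x.2 i : ℕ) := by
  rintro ⟨β, γ⟩ ⟨β', γ'⟩ h
  have h (i) : q * β i + γ i = q * β' i + γ' i := congr_fun h i
  ext i
  · simpa [Nat.mul_add_div (γ i).pos, Nat.div_eq_of_lt] using congr_arg (· / q) (h i)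
  · simpa [Nat.mul_add_mod, Nat.mod_eq_of_lt] using congr_arg (· % q) (h i)

variable {M σ : Type*} [CommMonoid M] [PartialOrder M] [IsOrderedMonoid M] [Fintype σ]
  {T : ℕ → (σ → ℕ) → M}

variable (σ) in
/-- The multi-indices of degree at most `d`. -/
def degreeSimplex [DecidableEq σ] (d : ℕ) : Finset (σ → ℕ) :=
  (Fintype.piFinset fun _ => Finset.range (d + 1)).filter fun α => ∑ k, α k ≤ d

theorem mem_degreeSimplex [DecidableEq σ] {d : ℕ} {α : σ → ℕ} :
    α ∈ degreeSimplex σ d ↔ ∑ k, α k ≤ d := by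
  simp only [degreeSimplex, Finset.mem_filter, Fintype.mem_piFinset, Finset.mem_range,
    Nat.lt_succ_iff, and_iff_right_iff_imp]
  exact fun h k => (Finset.single_le_sum (fun _ _ => zero_le) (Finset.mem_univ k)).trans h

theorem prod_enumeration_eq_prod_degreeSimplex {N : Type*} [CommMonoid N] [DecidableEq σ]
    {s d : ℕ} {E : Fin s → σ → ℕ} (hinj : Function.Injective E)
    (hE : ∀ α : σ → ℕ, ∑ k, α k ≤ d ↔ α ∈ Set.range E) (f : (σ → ℕ) → N) :
    ∏ i, f (E i) = ∏ α ∈ degreeSimplex σ d, f α := by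
  have himage : degreeSimplex σ d = Finset.univ.image E := by
    ext α
    simp [mem_degreeSimplex, hE]
  rw [himage, Finset.prod_image hinj.injOn]

theorem sum_nsmul_le {k : ℕ} {β : σ → ℕ} (hβ : ∑ i, β i ≤ k) (q : ℕ) :
    ∑ i, (q • β) i ≤ q * k := by
  simpa [← Finset.mul_sum] using Nat.mul_le_mul_left q hβ

theorem sum_fin_val_le {q : ℕ} (γ : σ → Fin q) : ∑ i, (γ i : ℕ) ≤ q * Fintype.card σ := by
  simpa [mul_comm] using Finset.sum_le_card_nsmul Finset.univ (fun i => (γ i : ℕ)) q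
    fun i _ => (γ i).is_lt.le

theorem apply_nsmul_le_pow (hT1 : ∀ d α, ∑ k, α k ≤ d → T d α ≤ 1)
    (hTmul : ∀ d e α β, ∑ k, α k ≤ d → ∑ k, β k ≤ e → T (d + e) (α + β) ≤ T d α * T e β)
    {k : ℕ} {β : σ → ℕ} (hβ : ∑ i, β i ≤ k) (q : ℕ) :
    T (q * k) (q • β) ≤ T k β ^ q := by
  induction q with
  | zero => simpa using hT1 0 0 (by simp)
  | succ q ih =>
    rw [add_mul, one_mul, succ_nsmul, pow_succ]
    exact (hTmul _ _ _ _ (sum_nsmul_le hβ q) hβ).trans (mul_le_mul_left ih _)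

theorem prod_degreeSimplex_le_pow [DecidableEq σ] (hT1 : ∀ d α, ∑ k, α k ≤ d → T d α ≤ 1)
    (hTmul : ∀ d e α β, ∑ k, α k ≤ d → ∑ k, β k ≤ e → T (d + e) (α + β) ≤ T d α * T e β)
    {d k q : ℕ} (hd : q * (k + Fintype.card σ) ≤ d) :
    ∏ α ∈ degreeSimplex σ d, T d α ≤
      (∏ β ∈ degreeSimplex σ k, T k β) ^ (q ^ (Fintype.card σ + 1)) := by
  rw [mul_add] at hd
  have hqk : q * k + (d - q * k) = d := by omega
  have hγ (γ : σ → Fin q) : ∑ i, (γ i : ℕ) ≤ d - q * k := (sum_fin_val_le γ).trans (by omega)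
  let ψ : (σ → ℕ) × (σ → Fin q) → σ → ℕ := fun x => q • x.1 + fun i => (x.2 i : ℕ)
  have himage : (degreeSimplex σ k ×ˢ Finset.univ).image ψ ⊆ degreeSimplex σ d := by
    refine Finset.image_subset_iff.2 fun x hx => mem_degreeSimplex.2 ?_
    have hβ := mem_degreeSimplex.1 (Finset.mem_product.1 hx).1
    exact (Finset.sum_add_distrib.trans_le (add_le_add (sum_nsmul_le hβ q) (hγ x.2))).trans_eq hqk
  have hTψ {β : σ → ℕ} (hβ : ∑ i, β i ≤ k) (γ : σ → Fin q) : T d (ψ (β, γ)) ≤ T k β ^ q := by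
    calc T d (ψ (β, γ)) ≤ T (q * k) (q • β) * T (d - q * k) (fun i => (γ i : ℕ)) := by
          simpa only [hqk] using hTmul _ _ _ _ (sum_nsmul_le hβ q) (hγ γ)
      _ ≤ T k β ^ q := mul_le_of_le_of_le_one (apply_nsmul_le_pow hT1 hTmul hβ q) (hT1 _ _ (hγ γ))
  calc ∏ α ∈ degreeSimplex σ d, T d α
      ≤ ∏ α ∈ (degreeSimplex σ k ×ˢ Finset.univ).image ψ, T d α :=
        Finset.prod_le_prod_of_subset_of_le_one' himage fun α hα _ =>
          hT1 d α (mem_degreeSimplex.1 hα)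
    _ = ∏ β ∈ degreeSimplex σ k, ∏ γ : σ → Fin q, T d (ψ (β, γ)) := by
        rw [Finset.prod_image (injective_nsmul_add_fin q).injOn, Finset.prod_product]
    _ ≤ ∏ β ∈ degreeSimplex σ k, ∏ _γ : σ → Fin q, T k β ^ q :=
        Finset.prod_le_prod' fun β hβ => Finset.prod_le_prod' fun γ _ =>
          hTψ (mem_degreeSimplex.1 hβ) γ
    _ = (∏ β ∈ degreeSimplex σ k, T k β) ^ (q ^ (Fintype.card σ + 1)) := by
        simp only [Finset.prod_const, Finset.card_univ, Fintype.card_fun, Fintype.card_fin,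
          Finset.prod_pow, ← pow_mul, pow_succ']

end SubmultiplicativeProduct

section Asymptotics

theorem tendsto_rpow_div_natCast_of_tendsto_div_pow {x : ℕ → ℝ} {c : ℝ} (hc : c ≠ 0) (m : ℕ)
    (hx0 : ∀ d, 0 ≤ x d) (hx : Tendsto (fun d : ℕ => x d / (d : ℝ) ^ m) atTop (𝓝 c)) (a : ℝ) :
    Tendsto (fun d : ℕ => x d ^ (a / d)) atTop (𝓝 1) := by
  have hratio : Tendsto (fun d : ℕ => (x d / (d : ℝ) ^ m) ^ (a / d)) atTop (𝓝 1) := by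
    simpa using hx.rpow (tendsto_const_div_atTop_nhds_zero_nat a) (Or.inl hc)
  have hpow : Tendsto (fun d : ℕ => (((d : ℝ) ^ (1 / (d : ℝ))) ^ (a * m))) atTop (𝓝 1) := by
    simpa using (tendsto_rpow_div.comp tendsto_natCast_atTop_atTop).rpow_const
      (p := a * m) (Or.inl one_ne_zero)
  have hmul := hratio.mul hpow
  rw [mul_one] at hmul
  refine hmul.congr' ?_
  filter_upwards [eventually_gt_atTop 0] with d hd
  have hd : (0 : ℝ) < d := Nat.cast_pos.2 hd
  rw [Real.div_rpow (hx0 d) (by positivity), ← Real.rpow_natCast, ← Real.rpow_mul hd.le,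
    ← Real.rpow_mul hd.le, show 1 / (d : ℝ) * (a * m) = m * (a / d) by ring]
  exact div_mul_cancel₀ _ (Real.rpow_pos_of_pos hd _).ne'

theorem tendsto_sdim_div_pow (n : ℕ) :
    Tendsto (fun d : ℕ => (sdim n d : ℝ) / (d : ℝ) ^ n) atTop (𝓝 (1 / n.factorial)) := by
  have hequiv := ((isEquivalent_choose n).comp_tendsto (tendsto_add_atTop_nat n)).div
    (Asymptotics.IsEquivalent.refl (u := fun d : ℕ => (d : ℝ) ^ n))
  refine hequiv.symm.tendsto_nhds ?_
  have hshift : Tendsto (fun d : ℕ => ((d : ℝ) / (d + n))⁻¹ ^ n / n.factorial) atTop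
      (𝓝 (1 / n.factorial)) := by
    simpa using (((tendsto_natCast_div_add_atTop (n : ℝ)).inv₀ one_ne_zero).pow n).div_const
      (n.factorial : ℝ)
  refine hshift.congr fun d => ?_
  simp only [inv_div, div_pow, div_right_comm, Function.comp_apply, Nat.cast_add, Pi.div_apply]

theorem tendsto_sdim_rpow_div (n : ℕ) (a : ℝ) :
    Tendsto (fun d : ℕ => (sdim n d : ℝ) ^ (a / d)) atTop (𝓝 1) :=
  tendsto_rpow_div_natCast_of_tendsto_div_pow (by positivity) n (fun _ => Nat.cast_nonneg _)
    (tendsto_sdim_div_pow n) a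

theorem tendsto_factorial_sdim_rpow (n : ℕ) :
    Tendsto (fun d : ℕ => ((sdim n d).factorial : ℝ) ^ (1 / (d * sdim n d) : ℝ)) atTop
      (𝓝 1) := by
  refine tendsto_of_tendsto_of_tendsto_of_le_of_le tendsto_const_nhds (tendsto_sdim_rpow_div n 1)
    (fun d => Real.one_le_rpow (mod_cast Nat.factorial_pos _) (by positivity)) fun d => ?_
  have hs : (sdim n d : ℝ) ≠ 0 := mod_cast (sdim_pos n d).ne'
  calc ((sdim n d).factorial : ℝ) ^ (1 / (d * sdim n d) : ℝ)
      ≤ ((sdim n d : ℝ) ^ (sdim n d : ℝ)) ^ (1 / (d * sdim n d) : ℝ) := by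
        gcongr
        rw [Real.rpow_natCast]
        exact_mod_cast Nat.factorial_le_pow _
    _ = (sdim n d : ℝ) ^ (1 / d : ℝ) := by
        rw [← Real.rpow_mul (Nat.cast_nonneg _)]
        congr 1
        field_simp

/- For fixed `k` the ratio tends to `k / (k + n) * (s(k) / (k + n) ^ n) * n!` as `d → ∞`, and this
tends to `1` as `k → ∞`. -/
theorem eventually_eventually_le_exponent_ratio (n : ℕ) {c : ℝ} (hc : c < 1) :
    ∀ᶠ k : ℕ in atTop, ∀ᶠ d : ℕ in atTop,
      c ≤ (k * sdim n k : ℝ) * ((d / (k + n) : ℕ) : ℝ) ^ (n + 1) / (d * sdim n d) := by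
  have hk : Tendsto (fun k : ℕ => (k / (k + n) : ℝ) ^ (n + 1) * (sdim n k / (k : ℝ) ^ n) *
      n.factorial) atTop (𝓝 1) := by
    have h := (((tendsto_natCast_div_add_atTop (n : ℝ)).pow (n + 1)).mul
      (tendsto_sdim_div_pow n)).mul_const (n.factorial : ℝ)
    rwa [one_pow, one_mul, one_div_mul_cancel (by positivity)] at h
  filter_upwards [hk.eventually_const_lt hc, eventually_gt_atTop 0] with k hck hk0
  have hfloor : Tendsto (fun d : ℕ => ((d / (k + n) : ℕ) : ℝ) / d) atTop (𝓝 (k + n : ℝ)⁻¹) := by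
    refine ((tendsto_nat_floor_mul_div_atTop (by positivity : (0 : ℝ) ≤ (k + n : ℝ)⁻¹)).comp
      tendsto_natCast_atTop_atTop).congr fun d => ?_
    rw [Function.comp_apply, inv_mul_eq_div, ← Nat.cast_add, Nat.floor_div_eq_div]
  have hd := ((hfloor.pow (n + 1)).const_mul (k * sdim n k : ℝ)).div (tendsto_sdim_div_pow n)
    (by positivity)
  have hlim : (k * sdim n k : ℝ) * (k + n : ℝ)⁻¹ ^ (n + 1) / (1 / n.factorial) =
      (k / (k + n) : ℝ) ^ (n + 1) * (sdim n k / (k : ℝ) ^ n) * n.factorial := by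
    rw [inv_pow, div_pow, pow_succ (k : ℝ)]
    field_simp
  rw [hlim] at hd
  filter_upwards [hd.eventually_const_lt hck, eventually_gt_atTop 0] with d hcd hd0
  have hs : (sdim n d : ℝ) ≠ 0 := mod_cast (sdim_pos n d).ne'
  refine hcd.le.trans_eq ?_
  rw [Pi.div_apply, div_pow, pow_succ (d : ℝ)]
  field_simp

theorem exists_tendsto_of_eventually_le_rpow {u : ℕ → ℝ≥0} (hu : ∀ d, u d ≤ 1)
    {θ : ℕ → ℕ → ℝ} (hθ : ∀ c < 1, ∀ᶠ k in atTop, ∀ᶠ d in atTop, c ≤ θ k d)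
    (h : ∀ᶠ k in atTop, ∀ᶠ d in atTop, u d ≤ u k ^ θ k d) :
    ∃ L, Tendsto u atTop (𝓝 L) := by
  refine tendsto_of_no_upcrossings dense_univ ?_ (isBoundedUnder_of ⟨1, hu⟩)
    (isBoundedUnder_of ⟨0, fun _ => zero_le⟩)
  rintro a - b - hab ⟨hlt, hgt⟩
  have ha : a ≠ 0 := fun ha => by simp [ha] at hlt
  obtain ⟨c, ⟨hc0, hc1⟩, hcb⟩ : ∃ c ∈ Set.Ioo (0 : ℝ) 1, a ^ c < b := by
    have hcont : Tendsto (fun c : ℝ => a ^ c) (𝓝[<] 1) (𝓝 (a ^ (1 : ℝ))) :=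
      tendsto_const_nhds.nnrpow (tendsto_id.mono_left nhdsWithin_le_nhds) (Or.inl ha)
    rw [NNReal.rpow_one] at hcont
    exact ((eventually_mem_set.2 (Ioo_mem_nhdsLT one_pos)).and
      (hcont.eventually_lt_const hab)).exists
  obtain ⟨k, hka, hkθ, hkpow⟩ := (hlt.and_eventually ((hθ c hc1).and h)).exists
  obtain ⟨d, hbd, hcd, hd⟩ := (hgt.and_eventually (hkθ.and hkpow)).exists
  refine hbd.not_ge (hd.trans (le_trans ?_ hcb.le))
  calc u k ^ θ k d ≤ u k ^ c :=
        Real.rpow_le_rpow_of_exponent_ge' (u k).2 (hu k) hc0.le hcd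
    _ ≤ a ^ c := by gcongr

end Asymptotics

section FeketeLimit

variable {𝕜 X : Type*} [NormedField 𝕜] [TopologicalSpace X] [CompactSpace X] {n : ℕ}
  {E : ∀ d, Fin (sdim n d) → Fin n → ℕ}

theorem exists_tendsto_prod_rpow {T : ℕ → (Fin n → ℕ) → ℝ≥0}
    (hE : ∀ d, IsEnum n d (E d)) (hT1 : ∀ d α, ∑ k, α k ≤ d → T d α ≤ 1)
    (hTmul : ∀ d e α β, ∑ k, α k ≤ d → ∑ k, β k ≤ e → T (d + e) (α + β) ≤ T d α * T e β) :
    ∃ L, Tendsto (fun d => (∏ i, T d (E d i)) ^ (1 / (d * sdim n d) : ℝ)) atTop (𝓝 L) := by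
  simp only [prod_enumeration_eq_prod_degreeSimplex (hE _).1 (hE _).2]
  have hprod (d) : ∏ α ∈ degreeSimplex (Fin n) d, T d α ≤ 1 :=
    Finset.prod_le_one' fun α hα => hT1 d α (mem_degreeSimplex.1 hα)
  refine exists_tendsto_of_eventually_le_rpow
    (fun d => NNReal.rpow_le_one (hprod d) (by positivity))
    (fun c => eventually_eventually_le_exponent_ratio n) ?_
  filter_upwards [eventually_gt_atTop 0] with k hk
  have hs : (sdim n k : ℝ) ≠ 0 := mod_cast (sdim_pos n k).ne'
  refine Eventually.of_forall fun d => ?_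
  have hpow := prod_degreeSimplex_le_pow hT1 hTmul (σ := Fin n) (d := d) (k := k)
    (q := d / (k + n)) (by simpa using Nat.div_mul_le_self d (k + n))
  rw [Fintype.card_fin] at hpow
  calc (∏ α ∈ degreeSimplex (Fin n) d, T d α) ^ (1 / (d * sdim n d) : ℝ)
      ≤ ((∏ β ∈ degreeSimplex (Fin n) k, T k β) ^ ((d / (k + n)) ^ (n + 1))) ^
          (1 / (d * sdim n d) : ℝ) := by gcongr
    _ = _ := by
        rw [← NNReal.rpow_natCast, ← NNReal.rpow_mul, ← NNReal.rpow_mul]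
        congr 1
        push_cast
        field_simp

theorem exists_tendsto_prod_chebyshevConst_rpow [Nonempty X] (W : C(X, 𝕜)) (z : Fin n → C(X, 𝕜))
    (hE : ∀ d, IsEnum n d (E d)) :
    ∃ L, Tendsto (fun d => (∏ i, chebyshevConst 𝕜 W z d (E d i)) ^ (1 / (d * sdim n d) : ℝ))
      atTop (𝓝 L) := by
  set R : ℝ≥0 := max 1 ‖W‖₊ * max 1 ‖z‖₊
  have hR : R ≠ 0 := by positivity
  obtain ⟨L, hL⟩ := exists_tendsto_prod_rpow (T := fun d α => chebyshevConst 𝕜 W z d α / R ^ d) hE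
    (fun d α hα => by
      rw [div_le_one (by positivity)]
      exact (chebyshevConst_le_nnnorm W z d α).trans (nnnorm_weightedMonomial_le W z hα))
    (fun d e α β hα hβ => by
      rw [div_mul_div_comm, pow_add]
      gcongr
      exact chebyshevConst_add_le W z hα hβ)
  refine ⟨R * L, (hL.const_mul R).congr' ?_⟩
  filter_upwards [eventually_gt_atTop 0] with d hd
  have hs : (sdim n d : ℝ) ≠ 0 := mod_cast (sdim_pos n d).ne'
  have hexp : (R ^ (d * sdim n d)) ^ (1 / (d * sdim n d) : ℝ) = R := by
    rw [← NNReal.rpow_natCast, ← NNReal.rpow_mul]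
    push_cast
    rw [mul_one_div_cancel (by positivity), NNReal.rpow_one]
  rw [Finset.prod_div_distrib, Finset.prod_const, Finset.card_fin, ← pow_mul, NNReal.div_rpow,
    hexp, mul_div_cancel₀ _ hR]

theorem exists_tendsto_nnnorm_weightedVDM_rpow [Nonempty X] (W : C(X, 𝕜)) (z : Fin n → C(X, 𝕜))
    (hE : ∀ d, IsEnum n d (E d)) {A : ∀ d, Fin (sdim n d) → X}
    (hA : ∀ d a, ‖weightedVDM W z d (E d) a‖₊ ≤ ‖weightedVDM W z d (E d) (A d)‖₊) :
    ∃ L, Tendsto (fun d => ‖weightedVDM W z d (E d) (A d)‖₊ ^ (1 / (d * sdim n d) : ℝ)) atTop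
      (𝓝 L) := by
  obtain ⟨L, hL⟩ := exists_tendsto_prod_chebyshevConst_rpow W z hE
  have hfact : Tendsto (fun d => ((sdim n d).factorial : ℝ≥0) ^ (1 / (d * sdim n d) : ℝ)) atTop
      (𝓝 1) := by
    rw [← NNReal.tendsto_coe]
    simpa only [NNReal.coe_rpow, NNReal.coe_natCast, NNReal.coe_one]
      using tendsto_factorial_sdim_rpow n
  have hupper := hfact.mul hL
  rw [one_mul] at hupper
  refine ⟨L, tendsto_of_tendsto_of_tendsto_of_le_of_le hL hupper (fun d => ?_) fun d => ?_⟩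
  · obtain ⟨a, ha⟩ := exists_prod_chebyshevConst_le_nnnorm_weightedVDM W z (hE d).1 (hE d).2
    exact NNReal.rpow_le_rpow (ha.trans (hA d a)) (by positivity)
  · rw [← NNReal.mul_rpow]
    exact NNReal.rpow_le_rpow (nnnorm_weightedVDM_le_factorial_mul_prod_chebyshevConst W z
      (hE d).1 (hE d).2 (A d)) (by positivity)

end FeketeLimit

section Perturbation

theorem dist_le_mul_sum_dist_of_lipschitzWith_update {ι X Y : Type*} [Fintype ι] [DecidableEq ι]
    [PseudoMetricSpace X] [PseudoMetricSpace Y] {F : (ι → X) → Y} {K : ℝ≥0}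
    (hF : ∀ a j, LipschitzWith K fun x => F (Function.update a j x)) (a b : ι → X) :
    dist (F a) (F b) ≤ K * ∑ j, dist (a j) (b j) := by
  suffices h : ∀ S : Finset ι, dist (F (S.piecewise a b)) (F b) ≤ K * ∑ j ∈ S, dist (a j) (b j) by
    simpa using h Finset.univ
  intro S
  induction S using Finset.induction_on with
  | empty => simp
  | insert j S hj ih =>
    have hstep := (hF (S.piecewise a b) j).dist_le_mul (a j) (b j)
    rw [← Finset.piecewise_insert, Function.update_eq_self_iff.2
      (Finset.piecewise_eq_of_notMem S a b hj).symm] at hstep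
    rw [Finset.sum_insert hj, mul_add]
    exact (dist_triangle _ _ _).trans (add_le_add hstep ih)

theorem dist_det_collocationMatrix_le {𝕜 X ι : Type*} [NormedField 𝕜] [PseudoMetricSpace X]
    [CompactSpace X] [Fintype ι] [DecidableEq ι] {P : Submodule 𝕜 C(X, 𝕜)} {K : ℝ≥0}
    (hP : ∀ f ∈ P, LipschitzWith (K * ‖f‖₊) f) {f : ι → C(X, 𝕜)} (hf : ∀ i, f i ∈ P) {V : ℝ≥0}
    (hV : ∀ a, ‖(collocationMatrix f a).det‖₊ ≤ V) (a b : ι → X) :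
    dist (collocationMatrix f a).det (collocationMatrix f b).det ≤
      (K * V : ℝ≥0) * ∑ j, dist (a j) (b j) := by
  refine dist_le_mul_sum_dist_of_lipschitzWith_update
    (F := fun a => (collocationMatrix f a).det) (fun c j => ?_) a b
  set g : C(X, 𝕜) := ∑ i, (collocationMatrix f c).adjugate j i • f i
  have hdet (x : X) : (collocationMatrix f (Function.update c j x)).det = g x :=
    det_collocationMatrix_update f c j x
  have hg : ‖g‖₊ ≤ V := (ContinuousMap.norm_le g V.2).2 fun x => hdet x ▸ hV _
  simp only [hdet]
  exact (hP g (P.sum_smul_mem _ fun i _ => hf i)).weaken (by gcongr)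

end Perturbation

section Markov

variable {n : ℕ}

/-- Complex polynomials in the `2n` real coordinates, as continuous functions on `H ⊂ ℂⁿ`. -/
def realPolyMap (H : Set (Pt n)) : MvPolynomial (Fin n ⊕ Fin n) ℂ →ₐ[ℂ] C(H, ℂ) :=
  MvPolynomial.aeval fun i =>
    ⟨fun x => (realCoords (x : Pt n) i : ℂ), by
      rcases i with k | k <;> simp only [realCoords, Sum.elim_inl, Sum.elim_inr] <;> fun_prop⟩

theorem realPolyMap_apply {H : Set (Pt n)} (p : MvPolynomial (Fin n ⊕ Fin n) ℂ) (x : H) :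
    realPolyMap H p x = MvPolynomial.eval (fun i => (realCoords (x : Pt n) i : ℂ)) p := by
  simp [realPolyMap, MvPolynomial.aeval_def, MvPolynomial.eval_eq, MvPolynomial.eval₂_eq,
    ContinuousMap.sum_apply, ContinuousMap.prod_apply]

theorem exists_eval_eq_re_eval {σ : Type*} (p : MvPolynomial σ ℂ) :
    ∃ q : MvPolynomial σ ℝ, q.totalDegree ≤ p.totalDegree ∧
      ∀ x : σ → ℝ, q.eval x = (p.eval fun i => (x i : ℂ)).re := by
  refine ⟨∑ m ∈ p.support, MvPolynomial.monomial m (p.coeff m).re,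
    MvPolynomial.totalDegree_finsetSum_le fun m hm =>
      (MvPolynomial.totalDegree_monomial_le _ _).trans (MvPolynomial.le_totalDegree hm),
    fun x => ?_⟩
  rw [map_sum, MvPolynomial.eval_eq, Complex.re_sum]
  refine Finset.sum_congr rfl fun m _ => ?_
  rw [MvPolynomial.eval_monomial, Finsupp.prod, ← Complex.re_mul_ofReal]
  push_cast
  rfl

-- Rotate `p` so that `p x - p y` is real and nonnegative; then apply `hML` to the real part of `p`.
theorem MarkovLip.lipschitzWith_realPolyMap {H : Set (Pt n)} [CompactSpace H] {M : ℝ}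
    (hML : MarkovLip n H M) {p : MvPolynomial (Fin n ⊕ Fin n) ℂ} {D : ℕ}
    (hp : p.totalDegree ≤ D) :
    LipschitzWith (M.toNNReal * D ^ 2 * ‖realPolyMap H p‖₊) (realPolyMap H p) := by
  refine LipschitzWith.of_dist_le_mul fun x y => ?_
  obtain ⟨c, hc, hcxy⟩ := RCLike.exists_norm_eq_mul_self (realPolyMap H p x - realPolyMap H p y)
  obtain ⟨q, hqdeg, hq⟩ := exists_eval_eq_re_eval (MvPolynomial.C c * p)
  have hqH (z : H) : q.eval (realCoords (z : Pt n)) = (c * realPolyMap H p z).re := by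
    rw [hq, map_mul, MvPolynomial.eval_C, realPolyMap_apply]
  have hqD : (q.totalDegree : ℝ) ≤ D := by
    exact_mod_cast hqdeg.trans ((MvPolynomial.totalDegree_mul _ _).trans (by simpa using hp))
  have hsup : sSup ((fun z : Pt n => |q.eval (realCoords z)|) '' H) ≤ ‖realPolyMap H p‖ := by
    refine Real.sSup_le ?_ (norm_nonneg _)
    rintro _ ⟨z, hz, rfl⟩
    calc |q.eval (realCoords z)| ≤ ‖c * realPolyMap H p ⟨z, hz⟩‖ := by
          rw [hqH ⟨z, hz⟩]
          exact Complex.abs_re_le_norm _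
      _ ≤ ‖realPolyMap H p‖ := by
          rw [norm_mul, hc, one_mul]
          exact ContinuousMap.norm_coe_le_norm _ _
  have hsup0 : 0 ≤ sSup ((fun z : Pt n => |q.eval (realCoords z)|) '' H) := by
    refine Real.sSup_nonneg ?_
    rintro _ ⟨z, -, rfl⟩
    exact abs_nonneg _
  calc dist (realPolyMap H p x) (realPolyMap H p y)
      = q.eval (realCoords (x : Pt n)) - q.eval (realCoords (y : Pt n)) := by
        rw [hqH, hqH, ← Complex.sub_re, ← mul_sub, ← hcxy, dist_eq_norm]
        rfl
    _ ≤ M * q.totalDegree ^ 2 * sSup ((fun z : Pt n => |q.eval (realCoords z)|) '' H) *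
          dist (x : Pt n) y := (le_abs_self _).trans (hML q x x.2 y y.2)
    _ ≤ (M.toNNReal * D ^ 2 * ‖realPolyMap H p‖₊ : ℝ≥0) * dist x y := by
        push_cast
        gcongr
        · exact Real.le_coe_toNNReal M
        · rfl

end Markov

section WeightedPolys

section Algebra

variable (𝕜 : Type*) {A σ : Type*} [CommSemiring 𝕜] [CommSemiring A] [Algebra 𝕜 A] [Fintype σ]
  (W : A) (z : σ → A)

/-- The weighted polynomials `W ^ d * p`, with `p` a polynomial of degree at most `d` in `z`. -/
def weightedPolys (d : ℕ) : Submodule 𝕜 A :=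
  Submodule.span 𝕜 (weightedMonomial W z d '' {α | ∑ k, α k ≤ d})

theorem weightedMonomial_mem_weightedPolys {d : ℕ} {α : σ → ℕ} (hα : ∑ k, α k ≤ d) :
    weightedMonomial W z d α ∈ weightedPolys 𝕜 W z d :=
  Submodule.subset_span ⟨α, hα, rfl⟩

end Algebra

variable {𝕜 X : Type*} [NormedField 𝕜] [PseudoMetricSpace X] [CompactSpace X]

theorem nnnorm_weightedVDM_le_two_mul {σ ι : Type*} [Fintype σ] [Fintype ι] [DecidableEq ι]
    {W : C(X, 𝕜)} {z : σ → C(X, 𝕜)} {d : ℕ} {E : ι → σ → ℕ} (hE : ∀ i, ∑ k, E i k ≤ d)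
    {K r : ℝ≥0} (hK : ∀ f ∈ weightedPolys 𝕜 W z d, LipschitzWith (K * ‖f‖₊) f)
    (hr : 2 * (K * Fintype.card ι * r) ≤ 1) {A : ι → X}
    (hA : ∀ a, ‖weightedVDM W z d E a‖₊ ≤ ‖weightedVDM W z d E A‖₊) {a : ι → X}
    (ha : ∀ j, dist (a j) (A j) ≤ r) :
    ‖weightedVDM W z d E A‖₊ ≤ 2 * ‖weightedVDM W z d E a‖₊ := by
  set V : ℝ≥0 := ‖weightedVDM W z d E A‖₊
  have hdist : dist (weightedVDM W z d E a) (weightedVDM W z d E A) ≤ V / 2 := by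
    calc dist (weightedVDM W z d E a) (weightedVDM W z d E A)
        ≤ (K * V : ℝ≥0) * ∑ j, dist (a j) (A j) :=
          dist_det_collocationMatrix_le hK
            (fun i => weightedMonomial_mem_weightedPolys 𝕜 W z (hE i)) hA a A
      _ ≤ (K * V : ℝ≥0) * ∑ _j : ι, (r : ℝ) := by
          gcongr with j
          exact ha j
      _ = (2 * (K * Fintype.card ι * r) : ℝ≥0) * (V / 2) := by
          simp only [Finset.sum_const, Finset.card_univ, nsmul_eq_mul]
          push_cast
          ring
      _ ≤ V / 2 := mul_le_of_le_one_left (by positivity) (mod_cast hr)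
  have htri : (V : ℝ) ≤ ‖weightedVDM W z d E a‖ + V / 2 := by
    rw [dist_comm, dist_eq_norm] at hdist
    exact (norm_le_norm_add_norm_sub' _ _).trans (by gcongr)
  rw [← NNReal.coe_le_coe]
  push_cast
  linarith

end WeightedPolys

section Integral

theorem mul_pow_card_le_setLIntegral_pi {X ι : Type*} [MeasurableSpace X] [Fintype ι]
    {ν : Measure X} [SigmaFinite ν] {B : ι → Set X} (hB : ∀ j, MeasurableSet (B j)) {m : ℝ≥0∞}
    (hm : ∀ j, m ≤ ν (B j)) {g : (ι → X) → ℝ≥0∞} {c : ℝ≥0∞} (hc : ∀ a ∈ Set.univ.pi B, c ≤ g a)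
    {S : Set (ι → X)} (hS : Set.univ.pi B ⊆ S) :
    c * m ^ Fintype.card ι ≤ ∫⁻ a in S, g a ∂(Measure.pi fun _ => ν) := by
  calc c * m ^ Fintype.card ι ≤ c * Measure.pi (fun _ => ν) (Set.univ.pi B) := by
        rw [Measure.pi_pi]
        gcongr
        exact Finset.pow_card_le_prod _ _ _ fun j _ => hm j
    _ = ∫⁻ _ in Set.univ.pi B, c ∂(Measure.pi fun _ => ν) := (setLIntegral_const _ _).symm
    _ ≤ ∫⁻ a in Set.univ.pi B, g a ∂(Measure.pi fun _ => ν) :=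
        setLIntegral_mono' (MeasurableSet.univ_pi hB) hc
    _ ≤ ∫⁻ a in S, g a ∂(Measure.pi fun _ => ν) := lintegral_mono_set hS

end Integral

section EmpiricalMeasure

theorem integral_empPM {X : Type*} [TopologicalSpace X] [MeasurableSpace X]
    [OpensMeasurableSpace X] {s : ℕ} (hs : s ≠ 0) (a : Fin s → X)
    (f : BoundedContinuousFunction X ℝ) :
    ∫ x, f x ∂(empPM hs a : Measure X) = (s : ℝ)⁻¹ * ∑ j, f (a j) := by
  change ∫ x, f x ∂emp a = _
  rw [emp, integral_smul_measure, integral_finsetSum_measure fun j _ => f.integrable _]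
  simp [integral_dirac' _ _ f.continuous.stronglyMeasurable]

variable {X : Type*} [PseudoMetricSpace X] [CompactSpace X] [MeasurableSpace X]
  [OpensMeasurableSpace X] {ι : Type*} {l : Filter ι} {s : ι → ℕ} (hs : ∀ i, s i ≠ 0)
  {a : ∀ i, Fin (s i) → X} {r : ι → ℝ} {μ : ProbabilityMeasure X}

theorem tendsto_empPM_of_dist_le (hr : Tendsto r l (𝓝 0))
    (ha : Tendsto (fun i => empPM (hs i) (a i)) l (𝓝 μ)) {b : ∀ i, Fin (s i) → X}
    (hab : ∀ i j, dist (a i j) (b i j) ≤ r i) :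
    Tendsto (fun i => empPM (hs i) (b i)) l (𝓝 μ) := by
  rw [ProbabilityMeasure.tendsto_iff_forall_integral_tendsto] at ha ⊢
  intro f
  refine (ha f).congr_dist (Metric.tendsto_nhds.2 fun ε hε => ?_)
  obtain ⟨δ, hδ, hfδ⟩ := Metric.uniformContinuous_iff.1
    (CompactSpace.uniformContinuous_of_continuous f.continuous) (ε / 2) (by positivity)
  filter_upwards [hr.eventually_lt_const hδ] with i hi
  have hsi : (0 : ℝ) < s i := mod_cast (hs i).bot_lt
  have hsum : ∑ j, dist (f (a i j)) (f (b i j)) ≤ s i * (ε / 2) := by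
    simpa using Finset.sum_le_card_nsmul Finset.univ _ _ fun j _ =>
      (hfδ ((hab i j).trans_lt hi)).le
  rw [integral_empPM, integral_empPM, dist_zero_right, Real.norm_of_nonneg dist_nonneg]
  calc dist ((s i : ℝ)⁻¹ * ∑ j, f (a i j)) ((s i : ℝ)⁻¹ * ∑ j, f (b i j))
      = (s i : ℝ)⁻¹ * dist (∑ j, f (a i j)) (∑ j, f (b i j)) := by
        rw [Real.dist_eq, ← mul_sub, abs_mul, abs_of_pos (inv_pos.2 hsi), Real.dist_eq]
    _ ≤ (s i : ℝ)⁻¹ * (s i * (ε / 2)) := by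
        gcongr
        exact (dist_sum_sum_le _ _ _).trans hsum
    _ < ε := by
        rw [inv_mul_cancel_left₀ hsi.ne']
        exact half_lt_self hε

theorem eventually_pi_ball_subset_preimage_empPM (hr : Tendsto r l (𝓝 0))
    (ha : Tendsto (fun i => empPM (hs i) (a i)) l (𝓝 μ)) {G : Set (ProbabilityMeasure X)}
    (hG : G ∈ 𝓝 μ) :
    ∀ᶠ i in l, Set.univ.pi (fun j => Metric.ball (a i j) (r i)) ⊆ empPM (hs i) ⁻¹' G := by
  -- If a box meets the complement of `G`, let `b i` be a point witnessing this.
  have hwitness (i : ι) : ∃ b : Fin (s i) → X, (∀ j, dist (a i j) (b j) ≤ |r i|) ∧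
      (empPM (hs i) b ∈ G →
        Set.univ.pi (fun j => Metric.ball (a i j) (r i)) ⊆ empPM (hs i) ⁻¹' G) := by
    by_cases h : Set.univ.pi (fun j => Metric.ball (a i j) (r i)) ⊆ empPM (hs i) ⁻¹' G
    · exact ⟨a i, by simp, fun _ => h⟩
    · obtain ⟨b, hb, hbG⟩ := Set.not_subset.1 h
      refine ⟨b, fun j => ?_, fun hb' => absurd hb' hbG⟩
      exact (Metric.mem_ball'.1 (hb j trivial)).le.trans (le_abs_self _)
  choose b hb hbG using hwitness
  have hr0 : Tendsto (fun i => |r i|) l (𝓝 0) := by simpa using hr.abs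
  exact ((tendsto_empPM_of_dist_le hs hr0 ha hb).eventually hG).mono hbG

end EmpiricalMeasure

section LowerBound

/-- The radius of the balls around the points of a Fekete configuration of order `d` on which the
weighted Vandermonde determinant keeps half its size, when weighted polynomials of order `d`
satisfy a Lipschitz inequality with constant `C * d ^ m`. -/
def feketeRadius (n : ℕ) (C : ℝ≥0) (m d : ℕ) : ℝ≥0 := (2 * (C * d ^ m * sdim n d))⁻¹

variable (n : ℕ) {C : ℝ≥0} {m : ℕ}

theorem feketeRadius_pos (hC : 0 < C) {d : ℕ} (hd : 0 < d) : 0 < feketeRadius n C m d := by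
  have hs : (0 : ℝ≥0) < sdim n d := mod_cast sdim_pos n d
  unfold feketeRadius
  positivity

theorem tendsto_feketeRadius (hC : 0 < C) (hm : m ≠ 0) :
    Tendsto (fun d => (feketeRadius n C m d : ℝ)) atTop (𝓝 0) := by
  simp only [feketeRadius, NNReal.coe_inv]
  refine Tendsto.inv_tendsto_atTop ?_
  refine tendsto_atTop_mono (fun d => ?_)
    (tendsto_natCast_atTop_atTop.const_mul_atTop (show (0 : ℝ) < 2 * C by positivity))
  have hd : (d : ℝ) ≤ d ^ m * sdim n d := by
    exact_mod_cast (Nat.le_self_pow hm d).trans (Nat.le_mul_of_pos_right _ (sdim_pos n d))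
  push_cast
  calc 2 * C * d ≤ 2 * C * (d ^ m * sdim n d : ℝ) := by gcongr
    _ = 2 * (C * d ^ m * sdim n d) := by ring

theorem tendsto_feketeRadius_rpow_div (hC : 0 < C) (a : ℝ) :
    Tendsto (fun d : ℕ => (feketeRadius n C m d : ℝ) ^ (a / d)) atTop (𝓝 1) := by
  have hratio : Tendsto (fun d : ℕ => 2 * (C * d ^ m * sdim n d) / (d : ℝ) ^ (m + n)) atTop
      (𝓝 (2 * C * (1 / n.factorial))) := by
    refine ((tendsto_sdim_div_pow n).const_mul (2 * C : ℝ)).congr' ?_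
    filter_upwards [eventually_gt_atTop 0] with d hd
    rw [pow_add]
    field_simp
  have hrpow := tendsto_rpow_div_natCast_of_tendsto_div_pow (by positivity) (m + n)
    (fun d => by positivity) hratio (-a)
  refine hrpow.congr fun d => ?_
  rw [feketeRadius, NNReal.coe_inv, Real.inv_rpow (by positivity), neg_div,
    Real.rpow_neg (by positivity)]
  push_cast
  rfl

theorem sq_mul_pow_rpow_one_div (b c : ℝ≥0∞) {d s : ℕ} (hd : d ≠ 0) (hs : s ≠ 0) :
    (b ^ 2 * c ^ s) ^ (1 / (2 * d * s) : ℝ) = b ^ (1 / (d * s) : ℝ) * c ^ (1 / (2 * d) : ℝ) := by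
  rw [ENNReal.mul_rpow_of_nonneg _ _ (by positivity), ← ENNReal.rpow_natCast,
    ← ENNReal.rpow_natCast, ← ENNReal.rpow_mul, ← ENNReal.rpow_mul]
  congr 2 <;> push_cast <;> field_simp

variable {n} {𝕜 X : Type*} [NormedField 𝕜] [PseudoMetricSpace X] [CompactSpace X]
  [MeasurableSpace X] [OpensMeasurableSpace X] {W : C(X, 𝕜)} {z : Fin n → C(X, 𝕜)}
  {E : ∀ d, Fin (sdim n d) → Fin n → ℕ} {A : ∀ d, Fin (sdim n d) → X} {ν : Measure X}
  [SigmaFinite ν] {T r₀ : ℝ} {μ : ProbabilityMeasure X} {G : Set (ProbabilityMeasure X)}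

theorem eventually_mul_rpow_le_rpow_setLIntegral (hE : ∀ d i, ∑ k, E d i k ≤ d)
    (hA : ∀ d a, ‖weightedVDM W z d (E d) a‖₊ ≤ ‖weightedVDM W z d (E d) (A d)‖₊)
    (hC : 0 < C) (hm : m ≠ 0)
    (hLip : ∀ d, ∀ f ∈ weightedPolys 𝕜 W z d, LipschitzWith (C * d ^ m * ‖f‖₊) f)
    (hr₀ : 0 < r₀)
    (hdens : ∀ x r, 0 < r → r < r₀ → ENNReal.ofReal (r ^ T) ≤ ν (Metric.ball x r))
    (hconv : Tendsto (fun d => empPM (sdim_pos n d).ne' (A d)) atTop (𝓝 μ)) (hG : G ∈ 𝓝 μ) :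
    ∀ᶠ d in atTop,
      ((‖weightedVDM W z d (E d) (A d)‖₊ / 2 : ℝ≥0) : ℝ≥0∞) ^ (1 / (d * sdim n d) : ℝ) *
          ENNReal.ofReal (feketeRadius n C m d ^ T) ^ (1 / (2 * d) : ℝ) ≤
        (∫⁻ a in empPM (sdim_pos n d).ne' ⁻¹' G, ‖weightedVDM W z d (E d) a‖ₑ ^ 2
          ∂(Measure.pi fun _ => ν)) ^ (1 / (2 * d * sdim n d) : ℝ) := by
  have hr := tendsto_feketeRadius n hC hm
  filter_upwards [eventually_pi_ball_subset_preimage_empPM (fun d => (sdim_pos n d).ne') hr hconv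
    hG, hr.eventually_lt_const hr₀, eventually_gt_atTop 0] with d hbox hrd hd
  have hsmall : 2 * (C * d ^ m * Fintype.card (Fin (sdim n d)) * feketeRadius n C m d) ≤ 1 := by
    rw [Fintype.card_fin, ← mul_assoc]
    exact mul_inv_le_one
  have hhalf : ∀ a ∈ Set.univ.pi fun j => Metric.ball (A d j) (feketeRadius n C m d),
      ((‖weightedVDM W z d (E d) (A d)‖₊ / 2 : ℝ≥0) : ℝ≥0∞) ^ 2 ≤
        ‖weightedVDM W z d (E d) a‖ₑ ^ 2 := by
    intro a ha
    have hle := nnnorm_weightedVDM_le_two_mul (hE d) (hLip d) hsmall (hA d)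
      fun j => (Metric.mem_ball.1 (ha j trivial)).le
    gcongr
    exact ENNReal.coe_le_coe.2 ((div_le_iff₀' two_pos).2 hle)
  have hint := mul_pow_card_le_setLIntegral_pi (ν := ν) (fun j => Metric.isOpen_ball.measurableSet)
    (fun j => hdens (A d j) _ (feketeRadius_pos n hC hd) hrd) hhalf hbox
  rw [Fintype.card_fin] at hint
  rw [← sq_mul_pow_rpow_one_div _ _ hd.ne' (sdim_pos n d).ne']
  exact ENNReal.rpow_le_rpow hint (by positivity)

theorem le_liminf_rpow_setLIntegral (hE : ∀ d i, ∑ k, E d i k ≤ d)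
    (hA : ∀ d a, ‖weightedVDM W z d (E d) a‖₊ ≤ ‖weightedVDM W z d (E d) (A d)‖₊)
    (hC : 0 < C) (hm : m ≠ 0)
    (hLip : ∀ d, ∀ f ∈ weightedPolys 𝕜 W z d, LipschitzWith (C * d ^ m * ‖f‖₊) f)
    (hr₀ : 0 < r₀)
    (hdens : ∀ x r, 0 < r → r < r₀ → ENNReal.ofReal (r ^ T) ≤ ν (Metric.ball x r))
    (hconv : Tendsto (fun d => empPM (sdim_pos n d).ne' (A d)) atTop (𝓝 μ)) (hG : G ∈ 𝓝 μ)
    {L : ℝ≥0} (hL : Tendsto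
      (fun d => ‖weightedVDM W z d (E d) (A d)‖₊ ^ (1 / (d * sdim n d) : ℝ)) atTop (𝓝 L)) :
    L ≤ liminf (fun d => (∫⁻ a in empPM (sdim_pos n d).ne' ⁻¹' G,
      ‖weightedVDM W z d (E d) a‖ₑ ^ 2 ∂(Measure.pi fun _ => ν)) ^
        (1 / (2 * d * sdim n d) : ℝ)) atTop := by
  have hexp : Tendsto (fun d : ℕ => (1 / (d * sdim n d) : ℝ)) atTop (𝓝 0) := by
    simp only [one_div]
    refine Tendsto.inv_tendsto_atTop (tendsto_atTop_mono (fun d => ?_) tendsto_natCast_atTop_atTop)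
    exact_mod_cast Nat.le_mul_of_pos_right d (sdim_pos n d)
  have htwo : Tendsto (fun d : ℕ => (2 : ℝ≥0) ^ (1 / (d * sdim n d) : ℝ)) atTop (𝓝 1) := by
    simpa using tendsto_const_nhds.nnrpow hexp (Or.inl two_ne_zero)
  have hhalf : Tendsto (fun d => ((‖weightedVDM W z d (E d) (A d)‖₊ / 2 : ℝ≥0) : ℝ≥0∞) ^
      (1 / (d * sdim n d) : ℝ)) atTop (𝓝 L) := by
    refine (ENNReal.tendsto_coe.2 (div_one L ▸ hL.div htwo one_ne_zero)).congr fun d => ?_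
    rw [Pi.div_apply, ← NNReal.div_rpow, ENNReal.coe_rpow_of_nonneg _ (by positivity)]
  have hmass : Tendsto (fun d : ℕ => ENNReal.ofReal (feketeRadius n C m d ^ T) ^
      (1 / (2 * d) : ℝ)) atTop (𝓝 1) := by
    rw [← ENNReal.ofReal_one]
    refine (ENNReal.tendsto_ofReal (tendsto_feketeRadius_rpow_div (m := m) n hC (T / 2))).congr
      fun d => ?_
    rw [ENNReal.ofReal_rpow_of_nonneg (by positivity) (by positivity),
      ← Real.rpow_mul NNReal.zero_le_coe]
    ring_nf
  have hlim := ENNReal.Tendsto.mul hhalf (Or.inr one_ne_top) hmass (Or.inl one_ne_zero)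
  rw [mul_one] at hlim
  rw [← hlim.liminf_eq]
  exact liminf_le_liminf
    (eventually_mul_rpow_le_rpow_setLIntegral hE hA hC hm hLip hr₀ hdens hconv hG)

end LowerBound

section RealPolynomialWeight

variable {n : ℕ} {H : Set (Pt n)}

theorem totalDegree_weightedMonomial_le {R σ τ : Type*} [CommSemiring R] [Fintype τ]
    {W : MvPolynomial σ R} {z : τ → MvPolynomial σ R} (hz : ∀ k, (z k).totalDegree ≤ 1) {d : ℕ}
    {α : τ → ℕ} (hα : ∑ k, α k ≤ d) :
    (weightedMonomial W z d α).totalDegree ≤ d * (W.totalDegree + 1) := by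
  calc (weightedMonomial W z d α).totalDegree
      ≤ (W ^ d).totalDegree + ∑ k, (z k ^ α k).totalDegree :=
        (MvPolynomial.totalDegree_mul _ _).trans
          (Nat.add_le_add_left (MvPolynomial.totalDegree_finsetProd _ _) _)
    _ ≤ d * W.totalDegree + ∑ k, α k * 1 := by
        gcongr with k
        · exact MvPolynomial.totalDegree_pow _ _
        · exact (MvPolynomial.totalDegree_pow _ _).trans (Nat.mul_le_mul_left _ (hz k))
    _ ≤ d * (W.totalDegree + 1) := by simpa [mul_add] using hα

/-- The complex coordinate `x ↦ x k` as a polynomial in the real coordinates. -/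
def complexCoord (k : Fin n) : MvPolynomial (Fin n ⊕ Fin n) ℂ :=
  MvPolynomial.X (Sum.inl k) + MvPolynomial.C Complex.I * MvPolynomial.X (Sum.inr k)

theorem totalDegree_complexCoord_le (k : Fin n) : (complexCoord k).totalDegree ≤ 1 := by
  refine (MvPolynomial.totalDegree_add _ _).trans (max_le (by simp) ?_)
  exact (MvPolynomial.totalDegree_mul _ _).trans (by simp)

theorem realPolyMap_complexCoord_apply (k : Fin n) (x : H) :
    realPolyMap H (complexCoord k) x = (x : Pt n) k := by
  simp [realPolyMap_apply, complexCoord, realCoords, mul_comm Complex.I]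

theorem realPolyMap_map_ofReal_apply (w : MvPolynomial (Fin n ⊕ Fin n) ℝ) (x : H) :
    realPolyMap H (w.map Complex.ofRealHom) x = w.eval (realCoords (x : Pt n)) := by
  rw [realPolyMap_apply, MvPolynomial.eval_map]
  exact (MvPolynomial.eval₂_comp Complex.ofRealHom (realCoords (x : Pt n)) w).symm

theorem absVDMQ_eq_enorm_weightedVDM {w : MvPolynomial (Fin n ⊕ Fin n) ℝ}
    (hw : ∀ x ∈ H, 0 < w.eval (realCoords x)) {Q : H → ℝ}
    (hQ : ∀ x : H, Q x = -Real.log (w.eval (realCoords (x : Pt n)))) {d : ℕ}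
    (E : Fin (sdim n d) → Fin n → ℕ) (a : Fin (sdim n d) → H) :
    absVDMQ n d E H Q a =
      ‖weightedVDM (realPolyMap H (w.map Complex.ofRealHom))
        (fun k => realPolyMap H (complexCoord k)) d E a‖ₑ := by
  have hexp (x : H) : Real.exp (-(d : ℝ) * Q x) =
      ‖realPolyMap H (w.map Complex.ofRealHom) x ^ d‖ := by
    rw [hQ, neg_mul_neg, mul_comm, Real.exp_mul, Real.exp_log (hw x x.2), Real.rpow_natCast,
      realPolyMap_map_ofReal_apply, norm_pow, Complex.norm_real,
      Real.norm_of_nonneg (hw x x.2).le]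
  have hmatrix : collocationMatrix (fun i => weightedMonomial
        (realPolyMap H (w.map Complex.ofRealHom)) (fun k => realPolyMap H (complexCoord k)) d (E i))
        a =
      Matrix.of fun i j => realPolyMap H (w.map Complex.ofRealHom) (a j) ^ d *
        (Matrix.of fun i j => ∏ k, (a j : Pt n) k ^ E i k) i j := by
    ext i j
    simp [weightedMonomial, ContinuousMap.prod_apply, realPolyMap_complexCoord_apply]
  rw [weightedVDM, hmatrix, Matrix.det_mul_row, ← ofReal_norm, norm_mul, norm_prod,
    absVDMQ, VDM, mul_comm]
  simp only [hexp]

theorem MarkovLip.lipschitzWith_of_mem_weightedPolys [CompactSpace H] {M : ℝ}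
    (hML : MarkovLip n H M) (w : MvPolynomial (Fin n ⊕ Fin n) ℂ) {d : ℕ} {f : C(H, ℂ)}
    (hf : f ∈ weightedPolys ℂ (realPolyMap H w) (fun k => realPolyMap H (complexCoord k)) d) :
    LipschitzWith (M.toNNReal * (w.totalDegree + 1) ^ 2 * d ^ 2 * ‖f‖₊) f := by
  have hle : weightedPolys ℂ (realPolyMap H w) (fun k => realPolyMap H (complexCoord k)) d ≤
      (MvPolynomial.restrictTotalDegree _ ℂ (d * (w.totalDegree + 1))).map
        (realPolyMap H).toLinearMap := by
    refine Submodule.span_le.2 ?_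
    rintro _ ⟨α, hα, rfl⟩
    refine ⟨weightedMonomial w complexCoord d α, (MvPolynomial.mem_restrictTotalDegree _ _ _).2
      (totalDegree_weightedMonomial_le totalDegree_complexCoord_le hα), ?_⟩
    simp [weightedMonomial]
  obtain ⟨p, hp, rfl⟩ := hle hf
  rw [AlgHom.toLinearMap_apply]
  convert hML.lipschitzWith_realPolyMap ((MvPolynomial.mem_restrictTotalDegree _ _ _).1 hp) using 2
  push_cast
  ring

end RealPolynomialWeight

section Main

variable {n : ℕ} {E : ∀ d, Fin (sdim n d) → Fin n → ℕ} {H : Set (Pt n)} {Q : H → ℝ}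

theorem deltaBar_eq_of_tendsto {A : ∀ d, Fin (sdim n d) → H}
    (hA : ∀ d a, absVDMQ n d (E d) H Q a ≤ absVDMQ n d (E d) H Q (A d)) {L : ℝ≥0∞}
    (hL : Tendsto (fun d => absVDMQ n d (E d) H Q (A d) ^ (1 / (d * sdim n d) : ℝ)) atTop (𝓝 L)) :
    deltaBar n E H Q = L := by
  have hsup (d : ℕ) : ⨆ a, absVDMQ n d (E d) H Q a = absVDMQ n d (E d) H Q (A d) :=
    le_antisymm (iSup_le (hA d)) (le_iSup _ _)
  simp only [deltaBar, hsup]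
  exact hL.limsup_eq

theorem deltaBar_le_liminf_Jd (hE : ∀ d, IsEnum n d (E d)) (hH : IsCompact H) {M : ℝ}
    (hML : MarkovLip n H M) {ν : Measure H} [SigmaFinite ν] {T r₀ : ℝ} (hr₀ : 0 < r₀)
    (hdens : ∀ x : H, ∀ r : ℝ, 0 < r → r < r₀ → ENNReal.ofReal (r ^ T) ≤ ν (Metric.ball x r))
    {w : MvPolynomial (Fin n ⊕ Fin n) ℝ} (hw : ∀ x ∈ H, 0 < w.eval (realCoords x))
    (hQ : ∀ x : H, Q x = -Real.log (w.eval (realCoords (x : Pt n))))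
    {A : ∀ d, Fin (sdim n d) → H}
    (hA : ∀ d a, absVDMQ n d (E d) H Q a ≤ absVDMQ n d (E d) H Q (A d))
    {μ : ProbabilityMeasure H}
    (hconv : Tendsto (fun d => empPM (sdim_pos n d).ne' (A d)) atTop (𝓝 μ))
    {G : Set (ProbabilityMeasure H)} (hG : G ∈ 𝓝 μ) :
    deltaBar n E H Q ≤ liminf (fun d => Jd n d (E d) H ν Q G) atTop := by
  have : CompactSpace H := isCompact_iff_compactSpace.1 hH
  have : Nonempty H := ⟨A 0 ⟨0, sdim_pos n 0⟩⟩
  have hVDM := fun d => absVDMQ_eq_enorm_weightedVDM hw hQ (E d)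
  set C : ℝ≥0 := (M.toNNReal + 1) * ((w.map Complex.ofRealHom).totalDegree + 1) ^ 2
  have hLip : ∀ d, ∀ f ∈ weightedPolys ℂ (realPolyMap H (w.map Complex.ofRealHom))
      (fun k => realPolyMap H (complexCoord k)) d, LipschitzWith (C * d ^ 2 * ‖f‖₊) f :=
    fun d f hf => (hML.lipschitzWith_of_mem_weightedPolys _ hf).weaken <| by
      simp only [C]
      gcongr
      exact (le_self_add : M.toNNReal ≤ M.toNNReal + 1)
  have hA' : ∀ d a, ‖weightedVDM (realPolyMap H (w.map Complex.ofRealHom))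
        (fun k => realPolyMap H (complexCoord k)) d (E d) a‖₊ ≤
      ‖weightedVDM (realPolyMap H (w.map Complex.ofRealHom))
        (fun k => realPolyMap H (complexCoord k)) d (E d) (A d)‖₊ := by
    simpa only [hVDM, enorm_eq_nnnorm, ENNReal.coe_le_coe] using hA
  obtain ⟨L, hL⟩ := exists_tendsto_nnnorm_weightedVDM_rpow _ _ hE hA'
  have hdelta : deltaBar n E H Q = L := by
    refine deltaBar_eq_of_tendsto hA ((ENNReal.tendsto_coe.2 hL).congr fun d => ?_)
    rw [hVDM, ENNReal.coe_rpow_of_nonneg _ (by positivity), enorm_eq_nnnorm]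
  simp only [hdelta, Jd, Gtilde, hVDM]
  exact le_liminf_rpow_setLIntegral (C := C) (fun d i => ((hE d).2 _).2 ⟨i, rfl⟩) hA'
    (by positivity) two_ne_zero hLip hr₀ hdens hconv hG hL

theorem liminf_log_Jd_ge_log_deltaBar_of_fekete_general (hE : ∀ d, IsEnum n d (E d))
    (hH : IsCompact H) {M : ℝ} (hML : MarkovLip n H M) {ν : Measure H} [SigmaFinite ν] {T r₀ : ℝ}
    (hr₀ : 0 < r₀)
    (hdens : ∀ x : H, ∀ r : ℝ, 0 < r → r < r₀ → ENNReal.ofReal (r ^ T) ≤ ν (Metric.ball x r))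
    {w : MvPolynomial (Fin n ⊕ Fin n) ℝ} (hw : ∀ x ∈ H, 0 < w.eval (realCoords x))
    (hQ : ∀ x : H, Q x = -Real.log (w.eval (realCoords (x : Pt n))))
    {A : ∀ d, Fin (sdim n d) → H}
    (hA : ∀ d a, absVDMQ n d (E d) H Q a ≤ absVDMQ n d (E d) H Q (A d))
    {μ : ProbabilityMeasure H}
    (hconv : Tendsto (fun d => empPM (sdim_pos n d).ne' (A d)) atTop (𝓝 μ)) :
    (∀ G : Set (ProbabilityMeasure H), IsOpen G → μ ∈ G →
      ENNReal.log (deltaBar n E H Q) ≤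
        liminf (fun d => ENNReal.log (Jd n d (E d) H ν Q G)) atTop) ∧
    ENNReal.log (deltaBar n E H Q) ≤
      ⨅ G ∈ {G : Set (ProbabilityMeasure H) | IsOpen G ∧ μ ∈ G},
        liminf (fun d => ENNReal.log (Jd n d (E d) H ν Q G)) atTop := by
  have hlog (G : Set (ProbabilityMeasure H)) (hG : IsOpen G) (hμ : μ ∈ G) :
      ENNReal.log (deltaBar n E H Q) ≤
        liminf (fun d => ENNReal.log (Jd n d (E d) H ν Q G)) atTop :=
    (ENNReal.log_monotone
      (deltaBar_le_liminf_Jd hE hH hML hr₀ hdens hw hQ hA hconv (hG.mem_nhds hμ))).trans_eq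
      (ENNReal.log_monotone.map_liminf_of_continuousAt _ ENNReal.continuous_log.continuousAt)
  exact ⟨hlog, le_iInf₂ fun G hG => hlog G hG.1 hG.2⟩

end Main

/-- **Lemma (lower bound at weighted equilibrium measures, Step 1).** Let `H ⊂ ℂⁿ` be compact
convex satisfying the Markov–Lipschitz inequality, `ν` a measure on `H` of mass at most `1`
with the uniform density bound, `w` a real polynomial with `w > 0` on `H`, `Q = -log w`.
If the empirical measures of weighted Fekete configurations `a^{*,d}` for `(H, Q)` converge
weak-* to `μ`, then `liminf_{d→∞} log J_d^Q(μ,G) ≥ log δ̄^w(H)` for every open neighborhood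
`G` of `μ`; consequently `inf_{G ∋ μ} liminf_{d→∞} log J_d^Q(μ,G) ≥ log δ̄^w(H)`. -/
theorem liminf_log_Jd_ge_log_deltaBar_of_fekete
    (n : ℕ) (hn : 1 ≤ n)
    (E : ∀ d, Fin (sdim n d) → (Fin n → ℕ)) (hE : ∀ d, IsEnum n d (E d))
    (H : Set (Pt n)) (hHcomp : IsCompact H) (hHconv : Convex ℝ H)
    (M : ℝ) (hM : 0 < M) (hML : MarkovLip n H M)
    (ν : Measure H) (hν : ν Set.univ ≤ 1)
    (T r₀ : ℝ) (hT : 0 < T) (hr₀ : 0 < r₀)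
    (hdens : ∀ z₀ : H, ∀ r : ℝ, 0 < r → r < r₀ →
      ENNReal.ofReal (r ^ T) ≤ ν (Metric.ball z₀ r))
    (w : MvPolynomial ((Fin n) ⊕ (Fin n)) ℝ)
    (hwpos : ∀ z ∈ H, 0 < MvPolynomial.eval (realCoords z) w)
    (Q : H → ℝ) (hQ : ∀ z : H, Q z = -Real.log (MvPolynomial.eval (realCoords (z : Pt n)) w))
    (A : ∀ d : ℕ, Fin (sdim n d) → H)
    (hFekete : ∀ (d : ℕ) (a : Fin (sdim n d) → H),
      absVDMQ n d (E d) H Q a ≤ absVDMQ n d (E d) H Q (A d))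
    (μ : ProbabilityMeasure H)
    (hconv : Tendsto (fun d => empPM (sdim_pos n d).ne' (A d)) atTop (𝓝 μ)) :
    (∀ G : Set (ProbabilityMeasure H), IsOpen G → μ ∈ G →
      ENNReal.log (deltaBar n E H Q) ≤
        liminf (fun d => ENNReal.log (Jd n d (E d) H ν Q G)) atTop) ∧
    ENNReal.log (deltaBar n E H Q) ≤
      ⨅ G ∈ {G : Set (ProbabilityMeasure H) | IsOpen G ∧ μ ∈ G},
        liminf (fun d => ENNReal.log (Jd n d (E d) H ν Q G)) atTop := by
  have : IsFiniteMeasure ν := ⟨hν.trans_lt one_lt_top⟩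
  exact liminf_log_Jd_ge_log_deltaBar_of_fekete_general hE hHcomp hML hr₀ hdens hwpos hQ hFekete
    hconv

end
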